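/- arXiv:2303.10799 — 3 statements merged into one kernel-verified Lean document; each statement's English description precedes it below -/
import Mathlib

section
/- Let x₁, x₂, x₃, x₄ ∈ ℝ² be the nodes of a positively oriented convex quadrilateral, i.e. the cross products of the two edge vectors emanating from each node are all strictly positive: cross(x₂−x₁,x₄−x₁) > 0, cross(x₃−x₂,x₁−x₂) > 0, cross(x₄−x₃,x₂−x₃) > 0, and cross(x₁−x₄,x₃−x₄) > 0. Then the Jacobian determinant of the isoparametric bilinear map φ is strictly positive at every point of the closed parametric square [−1,1]² (the element is not tangled). -/
/-- Bilinear shape functions on the reference square `[-1,1]²`. -/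
noncomputable def N1 (ξ η : ℝ) : ℝ := (1 - ξ) * (1 - η) / 4
noncomputable def N2 (ξ η : ℝ) : ℝ := (1 + ξ) * (1 - η) / 4
noncomputable def N3 (ξ η : ℝ) : ℝ := (1 + ξ) * (1 + η) / 4
noncomputable def N4 (ξ η : ℝ) : ℝ := (1 - ξ) * (1 + η) / 4

/-- Isoparametric bilinear map of the Q4 element with nodes `x₁, x₂, x₃, x₄ ∈ ℝ²`. -/
noncomputable def bilinearMap (x1 x2 x3 x4 : ℝ × ℝ) (p : ℝ × ℝ) : ℝ × ℝ :=
  N1 p.1 p.2 • x1 + N2 p.1 p.2 • x2 + N3 p.1 p.2 • x3 + N4 p.1 p.2 • x4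

/-- 2D cross product `a₁b₂ − a₂b₁`. -/
def cross (a b : ℝ × ℝ) : ℝ := a.1 * b.2 - a.2 * b.1

/-- The derivative of the bilinear map, written with its two column vectors. -/
theorem bilinearMap_hasFDerivAt (x1 x2 x3 x4 p : ℝ × ℝ) :
    HasFDerivAt (bilinearMap x1 x2 x3 x4)
      ((ContinuousLinearMap.fst ℝ ℝ ℝ).smulRight
          ((1 / 4 : ℝ) • ((1 - p.2) • (x2 - x1) + (1 + p.2) • (x3 - x4)))
        + (ContinuousLinearMap.snd ℝ ℝ ℝ).smulRight
          ((1 / 4 : ℝ) • ((1 - p.1) • (x4 - x1) + (1 + p.1) • (x3 - x2)))) p := by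
  have hf : HasFDerivAt (fun q : ℝ × ℝ => q.1) (ContinuousLinearMap.fst ℝ ℝ ℝ) p := hasFDerivAt_fst
  have hs : HasFDerivAt (fun q : ℝ × ℝ => q.2) (ContinuousLinearMap.snd ℝ ℝ ℝ) p := hasFDerivAt_snd
  have a1 := (((hf.const_sub 1).mul (hs.const_sub 1)).mul_const (1 / 4 : ℝ)).smul_const x1
  have a2 := (((hf.const_add 1).mul (hs.const_sub 1)).mul_const (1 / 4 : ℝ)).smul_const x2
  have a3 := (((hf.const_add 1).mul (hs.const_add 1)).mul_const (1 / 4 : ℝ)).smul_const x3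
  have a4 := (((hf.const_sub 1).mul (hs.const_add 1)).mul_const (1 / 4 : ℝ)).smul_const x4
  have h := ((a1.add a2).add a3).add a4
  refine (h.congr_fderiv ?_).congr_of_eventuallyEq (Filter.Eventually.of_forall fun q => ?_)
  · ext <;> simp <;> ring
  · simp [bilinearMap, N1, N2, N3, N4, div_eq_mul_inv]

theorem det_columns (a b : ℝ × ℝ) :
    ((ContinuousLinearMap.fst ℝ ℝ ℝ).smulRight a
      + (ContinuousLinearMap.snd ℝ ℝ ℝ).smulRight b).det = cross a b := by
  rw [ContinuousLinearMap.det, ← LinearMap.det_toMatrix (Module.Basis.finTwoProd ℝ),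
    Matrix.det_fin_two]
  simp [LinearMap.toMatrix_apply, cross]
  ring

/-- For a positively oriented convex quadrilateral, the Jacobian determinant of
the isoparametric bilinear map is strictly positive throughout the closed
parametric square `[-1,1]²`: the element is not tangled. -/
theorem convex_quad_jacobian_pos (x1 x2 x3 x4 : ℝ × ℝ)
    (h1 : cross (x2 - x1) (x4 - x1) > 0)
    (h2 : cross (x3 - x2) (x1 - x2) > 0)
    (h3 : cross (x4 - x3) (x2 - x3) > 0)
    (h4 : cross (x1 - x4) (x3 - x4) > 0) :
    ∀ p ∈ Set.Icc ((-1, -1) : ℝ × ℝ) (1, 1),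
      (fderiv ℝ (bilinearMap x1 x2 x3 x4) p).det > 0 := by
  rintro ⟨u, v⟩ hp
  obtain ⟨⟨hu1, hv1⟩, hu2, hv2⟩ := hp
  simp only at hu1 hv1 hu2 hv2
  rw [(bilinearMap_hasFDerivAt x1 x2 x3 x4 (u, v)).fderiv, det_columns]
  have key : cross ((1 / 4 : ℝ) • ((1 - v) • (x2 - x1) + (1 + v) • (x3 - x4)))
      ((1 / 4 : ℝ) • ((1 - u) • (x4 - x1) + (1 + u) • (x3 - x2)))
      = 1 / 16 * ((1 - u) * (1 - v) * cross (x2 - x1) (x4 - x1)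
        + (1 + u) * (1 - v) * cross (x3 - x2) (x1 - x2)
        + (1 + u) * (1 + v) * cross (x4 - x3) (x2 - x3)
        + (1 - u) * (1 + v) * cross (x1 - x4) (x3 - x4)) := by
    simp [cross]
    ring
  simp only [key]
  set c1 := cross (x2 - x1) (x4 - x1)
  set c2 := cross (x3 - x2) (x1 - x2)
  set c3 := cross (x4 - x3) (x2 - x3)
  set c4 := cross (x1 - x4) (x3 - x4)
  -- the weights are nonnegative with sum 4; compare with the smallest corner value
  obtain ⟨m, hm, m1, m2, m3, m4⟩ : ∃ m > 0, m ≤ c1 ∧ m ≤ c2 ∧ m ≤ c3 ∧ m ≤ c4 :=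
    ⟨min (min c1 c2) (min c3 c4), by simp [h1, h2, h3, h4] <;> simp_all, by simp, by simp,
      by simp, by simp⟩
  have w1 := mul_nonneg (mul_nonneg (sub_nonneg.2 hu2) (sub_nonneg.2 hv2)) (sub_nonneg.2 m1)
  have p1 : 0 ≤ 1 + u := by linarith
  have p2 : 0 ≤ 1 + v := by linarith
  have w2 := mul_nonneg (mul_nonneg p1 (sub_nonneg.2 hv2)) (sub_nonneg.2 m2)
  have w3 := mul_nonneg (mul_nonneg p1 p2) (sub_nonneg.2 m3)
  have w4 := mul_nonneg (mul_nonneg (sub_nonneg.2 hu2) p2) (sub_nonneg.2 m4)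
  nlinarith
end

section
/- Let x₁, x₂, x₃, x₄ ∈ ℝ² be the nodes of a quadrilateral with exactly one re-entrant (concave) vertex, say cross(x₂−x₁,x₄−x₁) < 0 while the corresponding cross products at the other three nodes are strictly positive. Then the Jacobian determinant of the isoparametric bilinear map φ takes both strictly positive and strictly negative values on the parametric square [−1,1]², and its zero set intersects the square in a nonempty set (so the square divides into a positive-Jacobian region J⁺ and a nonempty negative-Jacobian region J⁻). -/
theorem det_eq_cross (L : ℝ × ℝ →L[ℝ] ℝ × ℝ) : L.det = cross (L (1, 0)) (L (0, 1)) := by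
  have h : L.det = LinearMap.det (L : ℝ × ℝ →ₗ[ℝ] ℝ × ℝ) := rfl
  rw [h, ← LinearMap.det_toMatrix (Module.Basis.finTwoProd ℝ), Matrix.det_fin_two]
  simp [LinearMap.toMatrix_apply, cross]
  ring

theorem jac_formula (x1 x2 x3 x4 : ℝ × ℝ) (ξ η : ℝ) :
    (fderiv ℝ (bilinearMap x1 x2 x3 x4) (ξ, η)).det =
      cross (((1 - η) / 4) • (x2 - x1) + ((1 + η) / 4) • (x3 - x4))
        (((1 - ξ) / 4) • (x4 - x1) + ((1 + ξ) / 4) • (x3 - x2)) := by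
  have hd : DifferentiableAt ℝ (bilinearMap x1 x2 x3 x4) (ξ, η) := by
    unfold bilinearMap N1 N2 N3 N4
    fun_prop
  rw [det_eq_cross]
  have e1 : fderiv ℝ (bilinearMap x1 x2 x3 x4) (ξ, η) (1, 0) =
      ((1 - η) / 4) • (x2 - x1) + ((1 + η) / 4) • (x3 - x4) := by
    rw [← hd.lineDeriv_eq_fderiv]
    have : (fun t : ℝ => bilinearMap x1 x2 x3 x4 ((ξ, η) + t • ((1, 0) : ℝ × ℝ))) =
        fun t : ℝ => bilinearMap x1 x2 x3 x4 (ξ, η) +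
          t • (((1 - η) / 4) • (x2 - x1) + ((1 + η) / 4) • (x3 - x4)) := by
      funext t
      ext <;> simp [bilinearMap, N1, N2, N3, N4] <;> ring
    unfold lineDeriv
    rw [this]
    have h := ((hasDerivAt_id (0 : ℝ)).smul_const
      (((1 - η) / 4) • (x2 - x1) + ((1 + η) / 4) • (x3 - x4))).const_add
        (bilinearMap x1 x2 x3 x4 (ξ, η))
    simpa only [one_smul, id] using h.deriv
  have e2 : fderiv ℝ (bilinearMap x1 x2 x3 x4) (ξ, η) (0, 1) =
      ((1 - ξ) / 4) • (x4 - x1) + ((1 + ξ) / 4) • (x3 - x2) := by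
    rw [← hd.lineDeriv_eq_fderiv]
    have : (fun t : ℝ => bilinearMap x1 x2 x3 x4 ((ξ, η) + t • ((0, 1) : ℝ × ℝ))) =
        fun t : ℝ => bilinearMap x1 x2 x3 x4 (ξ, η) +
          t • (((1 - ξ) / 4) • (x4 - x1) + ((1 + ξ) / 4) • (x3 - x2)) := by
      funext t
      ext <;> simp [bilinearMap, N1, N2, N3, N4] <;> ring
    unfold lineDeriv
    rw [this]
    have h := ((hasDerivAt_id (0 : ℝ)).smul_const
      (((1 - ξ) / 4) • (x4 - x1) + ((1 + ξ) / 4) • (x3 - x2))).const_add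
        (bilinearMap x1 x2 x3 x4 (ξ, η))
    simpa only [one_smul, id] using h.deriv
  rw [e1, e2]

theorem jac_edge (x1 x2 x3 x4 : ℝ × ℝ) (ξ : ℝ) :
    (fderiv ℝ (bilinearMap x1 x2 x3 x4) (ξ, -1)).det =
      ((1 - ξ) * cross (x2 - x1) (x4 - x1) + (1 + ξ) * cross (x3 - x2) (x1 - x2)) / 8 := by
  rw [jac_formula]
  simp [cross]
  ring

/-- For a quadrilateral with exactly one re-entrant (concave) vertex (here the
first node), the Jacobian determinant of the isoparametric bilinear map takes
both strictly positive and strictly negative values on the parametric square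
`[-1,1]²`, and its zero set meets the square: the square divides into a
positive-Jacobian region `J⁺` and a nonempty negative-Jacobian region `J⁻`. -/
theorem concave_quad_jacobian_changes_sign (x1 x2 x3 x4 : ℝ × ℝ)
    (h1 : cross (x2 - x1) (x4 - x1) < 0)
    (h2 : cross (x3 - x2) (x1 - x2) > 0)
    (h3 : cross (x4 - x3) (x2 - x3) > 0)
    (h4 : cross (x1 - x4) (x3 - x4) > 0) :
    (∃ p ∈ Set.Icc ((-1, -1) : ℝ × ℝ) (1, 1),
        (fderiv ℝ (bilinearMap x1 x2 x3 x4) p).det > 0) ∧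
    (∃ p ∈ Set.Icc ((-1, -1) : ℝ × ℝ) (1, 1),
        (fderiv ℝ (bilinearMap x1 x2 x3 x4) p).det < 0) ∧
    (∃ p ∈ Set.Icc ((-1, -1) : ℝ × ℝ) (1, 1),
        (fderiv ℝ (bilinearMap x1 x2 x3 x4) p).det = 0) := by
  have mem : ∀ ξ : ℝ, -1 ≤ ξ → ξ ≤ 1 → (ξ, (-1 : ℝ)) ∈ Set.Icc ((-1, -1) : ℝ × ℝ) (1, 1) := by
    intro ξ ha hb
    exact ⟨⟨ha, le_refl _⟩, ⟨hb, by norm_num⟩⟩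
  refine ⟨⟨(1, -1), mem 1 (by norm_num) le_rfl, ?_⟩,
    ⟨(-1, -1), mem (-1) le_rfl (by norm_num), ?_⟩, ?_⟩
  · rw [jac_edge]; linarith
  · rw [jac_edge]; linarith
  · generalize ha : cross (x2 - x1) (x4 - x1) = a at *
    generalize hb : cross (x3 - x2) (x1 - x2) = b at *
    have hab : 0 < b - a := by linarith
    refine ⟨((-a - b) / (b - a), -1), mem _ ?_ ?_, ?_⟩
    · rw [le_div_iff₀ hab]; linarith
    · rw [div_le_iff₀ hab]; linarith
    · rw [jac_edge, ha, hb]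
      field_simp
      ring
end

section
/- Let U ⊆ ℝ² be an open connected set and φ : U → ℝ² a continuously differentiable map. If the Jacobian determinant det(Dφ) takes a strictly positive value at some point of U and a strictly negative value at some other point of U, then φ is not injective on U. (Hence a concave bilinear element, whose Jacobian determinant changes sign on the parametric square, necessarily folds onto itself: its parametric map is not fully invertible.) -/
/-- Two loops in the punctured plane differ by an exponential factor. -/
def LoopRel (f g : Circle → ℂ) : Prop :=
  ∃ h : Circle → ℂ, Continuous h ∧ ∀ z, f z = g z * Complex.exp (h z)

theorem LoopRel.rfl' (f : Circle → ℂ) : LoopRel f f := ⟨fun _ => 0, continuous_const, by simp⟩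

theorem LoopRel.symm' {f g : Circle → ℂ} (H : LoopRel f g) : LoopRel g f := by
  obtain ⟨h, hc, hh⟩ := H
  refine ⟨fun z => - h z, hc.neg, fun z => ?_⟩
  rw [hh z, mul_assoc, ← Complex.exp_add]; simp

theorem LoopRel.trans' {f g k : Circle → ℂ} (H : LoopRel f g) (H' : LoopRel g k) :
    LoopRel f k := by
  obtain ⟨h, hc, hh⟩ := H
  obtain ⟨h', hc', hh'⟩ := H'
  refine ⟨fun z => h' z + h z, hc'.add hc, fun z => ?_⟩
  rw [hh z, hh' z, mul_assoc, ← Complex.exp_add]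

theorem loopRel_of_close {f g : Circle → ℂ} (hf : Continuous f) (hg : Continuous g)
    (H : ∀ z, ‖f z - g z‖ < ‖g z‖) : LoopRel f g := by
  have hg0 : ∀ z, g z ≠ 0 := fun z h => by
    have := H z
    rw [h, norm_zero] at this
    exact absurd this (not_lt.2 (norm_nonneg _))
  have key : ∀ z, f z / g z ∈ Complex.slitPlane := fun z => by
    have h1 : ‖f z / g z - 1‖ < 1 := by
      have : f z / g z - 1 = (f z - g z) / g z := by field_simp [hg0 z]
      rw [this, norm_div, div_lt_one (norm_pos_iff.2 (hg0 z))]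
      exact H z
    have := Complex.mem_slitPlane_of_norm_lt_one h1
    simpa using this
  refine ⟨fun z => Complex.log (f z / g z), (hf.div hg hg0).clog key, fun z => ?_⟩
  rw [Complex.exp_log (Complex.slitPlane_ne_zero (key z))]
  field_simp [hg0 z]

theorem no_sq_exp (h : Circle → ℂ) (hc : Continuous h)
    (H : ∀ z : Circle, (z : ℂ) ^ 2 = Complex.exp (h z)) : False := by
  let k : ℝ → ℝ := fun t => (2 * t - (h (Circle.exp t)).im) / (2 * Real.pi)
  have kc : Continuous k := by
    have : Continuous fun t : ℝ => h (Circle.exp t) := hc.comp Circle.exp.continuous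
    exact ((continuous_const.mul continuous_id).sub
      (Complex.continuous_im.comp this)).div_const _
  have kint : ∀ t, ∃ n : ℤ, k t = n := fun t => by
    have h1 := H (Circle.exp t)
    rw [Circle.coe_exp, ← Complex.exp_nat_mul, Complex.exp_eq_exp_iff_exists_int] at h1
    obtain ⟨n, hn⟩ := h1
    have h2 := congrArg Complex.im hn
    refine ⟨n, ?_⟩
    simp at h2
    simp only [k]
    rw [div_eq_iff (by positivity)]
    linarith
  have hdiff : k (2 * Real.pi) = k 0 + 2 := by
    simp only [k, Circle.exp_two_pi, Circle.exp_zero]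
    field_simp
    ring
  have hivt := intermediate_value_Icc (f := k) (a := 0) (b := 2 * Real.pi) (by positivity)
    kc.continuousOn
  obtain ⟨t, -, ht⟩ := hivt (show k 0 + 1 / 2 ∈ Set.Icc (k 0) (k (2 * Real.pi)) by
    rw [hdiff]; constructor <;> linarith)
  obtain ⟨n, hn⟩ := kint t
  obtain ⟨m, hm⟩ := kint 0
  rw [hn, hm] at ht
  have : (2 * n : ℝ) = 2 * m + 1 := by linarith
  have : 2 * n = 2 * m + 1 := by exact_mod_cast this
  omega

theorem not_loopRel {a b : ℂ} (ha : a ≠ 0) (hb : b ≠ 0)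
    (H : LoopRel (fun z => a * z) (fun z => b * (starRingEnd ℂ) z)) : False := by
  obtain ⟨h, hc, hh⟩ := H
  refine no_sq_exp (fun z => h z + Complex.log (b / a)) (hc.add continuous_const) fun z => ?_
  rw [Complex.exp_add, Complex.exp_log (div_ne_zero hb ha)]
  have h1 := hh z
  have h2 : (z : ℂ) * (starRingEnd ℂ) z = 1 := by
    rw [Complex.mul_conj, Circle.normSq_coe]; simp
  simp only at h1
  field_simp
  linear_combination (z : ℂ) * h1 + b * Complex.exp (h z) * h2

theorem near_linear {ψ : ℂ → ℂ} {T : ℂ →L[ℝ] ℂ} {p : ℂ} (hT : HasFDerivAt ψ T p)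
    (S : ℂ → ℂ) {m M : ℝ} (hmM : m < M) (h1 : ∀ z, ‖T z - S z‖ ≤ m * ‖z‖)
    (h2 : ∀ z, M * ‖z‖ ≤ ‖S z‖) :
    ∀ᶠ r : ℝ in nhdsWithin 0 (Set.Ioi 0), ∀ z : Circle,
      ‖(ψ (p + r * z) - ψ p) - S (r * z)‖ < ‖S (r * z)‖ := by
  have hε : 0 < (M - m) / 2 := by linarith
  have := (hasFDerivAt_iff_isLittleO_nhds_zero.1 hT).def hε
  obtain ⟨δ, hδ, hb⟩ := Metric.eventually_nhds_iff.1 this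
  filter_upwards [Ioo_mem_nhdsGT hδ] with r hr z
  have hn : ‖(r : ℂ) * z‖ = r := by
    rw [norm_mul, Circle.norm_coe, Complex.norm_real, Real.norm_of_nonneg hr.1.le, mul_one]
  have h3 := hb (y := (r : ℂ) * z) (by rw [dist_zero_right, hn]; exact hr.2)
  have h4 := h1 (r * z)
  have h5 := h2 (r * z)
  rw [hn] at h3 h4 h5
  have h6 := norm_add_le (ψ (p + r * z) - ψ p - T (r * z)) (T (r * z) - S (r * z))
  rw [sub_add_sub_cancel] at h6
  have : 0 < (M - m) / 2 * r := mul_pos hε hr.1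
  nlinarith

theorem core {V : Set ℂ} (hV : IsOpen V) (hC : IsConnected V) {ψ : ℂ → ℂ}
    (hψ : ContinuousOn ψ V) (hinj : Set.InjOn ψ V) {p q : ℂ} (hp : p ∈ V) (hq : q ∈ V)
    {T T' : ℂ →L[ℝ] ℂ} (hT : HasFDerivAt ψ T p) (hT' : HasFDerivAt ψ T' q)
    {a b a' b' : ℂ} (hab : ∀ z, T z = a * z + b * (starRingEnd ℂ) z)
    (hab' : ∀ z, T' z = a' * z + b' * (starRingEnd ℂ) z)
    (h1 : ‖b‖ < ‖a‖) (h2 : ‖a'‖ < ‖b'‖) : False := by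
  obtain ⟨γ, hγ⟩ := (hV.isConnected_iff_isPathConnected.1 hC).joinedIn p hp q hq
  obtain ⟨δ, hδ, hK⟩ := (isCompact_range γ.continuous).exists_cthickening_subset_open hV
    (Set.range_subset_iff.2 hγ)
  have e1 := near_linear hT (fun z => a * z) h1 (fun z => by simp [hab]) (fun z => by simp)
  have e2 := near_linear hT' (fun z => b' * (starRingEnd ℂ) z) h2
    (fun z => by simp [hab']) (fun z => by simp)
  obtain ⟨r, ⟨hr1, hr2⟩, hr⟩ := ((e1.and e2).and (Ioo_mem_nhdsGT hδ)).exists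
  have hn : ∀ z : Circle, ‖(r : ℂ) * z‖ = r := fun z => by
    rw [norm_mul, Circle.norm_coe, Complex.norm_real, Real.norm_of_nonneg hr.1.le, mul_one]
  have hmem : ∀ s (z : Circle), γ s + r * z ∈ V := fun s z => by
    refine hK (Metric.mem_cthickening_of_dist_le _ (γ s) _ _ (Set.mem_range_self s) ?_)
    rw [dist_eq_norm, add_sub_cancel_left, hn]; exact hr.2.le
  let H : unitInterval × Circle → ℂ := fun x => ψ (γ x.1 + r * x.2) - ψ (γ x.1)
  have Hc : Continuous H := by
    have c1 : Continuous fun x : unitInterval × Circle => γ x.1 + r * x.2 := by fun_prop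
    have c2 : Continuous fun x : unitInterval × Circle => γ x.1 := by fun_prop
    exact (hψ.comp_continuous c1 (fun x => hmem x.1 x.2)).sub
      (hψ.comp_continuous c2 (fun x => hγ x.1))
  have H0 : ∀ x, H x ≠ 0 := fun x hx => by
    have := hinj (hmem x.1 x.2) (hγ x.1) (sub_eq_zero.1 hx)
    have h3 := hn x.2
    rw [add_eq_left.1 this, norm_zero] at h3
    exact hr.1.ne h3
  have Hs : ∀ s, Continuous fun z => H (s, z) := fun s => by fun_prop
  have hrel : LoopRel (fun z => H (0, z)) (fun z => H (1, z)) := by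
    refine isPreconnected_univ.induction₂
      (fun s t : unitInterval => LoopRel (fun z => H (s, z)) (fun z => H (t, z)))
      ?_ (fun _ _ _ _ _ _ h h' => h.trans' h') (fun _ _ _ _ h => h.symm')
      (Set.mem_univ _) (Set.mem_univ _)
    intro s _
    rw [nhdsWithin_univ]
    have : ∀ᶠ t in nhds s, ∀ z ∈ (Set.univ : Set Circle),
        ‖H (t, z) - H (s, z)‖ < ‖H (s, z)‖ := by
      refine isCompact_univ.eventually_forall_of_forall_eventually fun z _ => ?_
      have hc : Continuous fun x : unitInterval × Circle =>
          ‖H (s, x.2)‖ - ‖H x - H (s, x.2)‖ := by fun_prop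
      have := (hc.tendsto (s, z)).eventually_const_lt (u := 0)
        (by simpa using H0 (s, z))
      filter_upwards [this] with x hx
      exact sub_pos.1 hx
    filter_upwards [this] with t ht
    exact (loopRel_of_close (Hs t) (Hs s) fun z => ht z trivial).symm'
  have r0 : LoopRel (fun z => H (0, z)) (fun z => (a * r) * z) := by
    refine loopRel_of_close (Hs 0) (by fun_prop) fun z => ?_
    have := hr1 z
    simpa only [H, γ.source, mul_assoc] using this
  have r1 : LoopRel (fun z => H (1, z)) (fun z => (b' * r) * (starRingEnd ℂ) z) := by
    refine loopRel_of_close (Hs 1) (by fun_prop) fun z => ?_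
    have := hr2 z
    simpa only [H, γ.target, mul_assoc, map_mul, Complex.conj_ofReal] using this
  have hrC : (r : ℂ) ≠ 0 := by exact_mod_cast hr.1.ne'
  exact not_loopRel
    (mul_ne_zero (norm_pos_iff.1 ((norm_nonneg _).trans_lt h1)) hrC)
    (mul_ne_zero (norm_pos_iff.1 ((norm_nonneg _).trans_lt h2)) hrC)
    ((r0.symm'.trans' hrel).trans' r1)

theorem det_prod_formula (A : (ℝ × ℝ) →L[ℝ] (ℝ × ℝ)) :
    A.det = (A (1, 0)).1 * (A (0, 1)).2 - (A (0, 1)).1 * (A (1, 0)).2 := by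
  change LinearMap.det (A : (ℝ × ℝ) →ₗ[ℝ] (ℝ × ℝ)) = _
  rw [← LinearMap.det_toMatrix (Module.Basis.finTwoProd ℝ), Matrix.det_fin_two]
  simp [LinearMap.toMatrix_apply]

theorem exists_conj_form (A : (ℝ × ℝ) →L[ℝ] (ℝ × ℝ)) :
    ∃ a b : ℂ, (∀ z : ℂ, Complex.equivRealProdCLM.symm (A (Complex.equivRealProdCLM z))
      = a * z + b * (starRingEnd ℂ) z) ∧ A.det = ‖a‖ ^ 2 - ‖b‖ ^ 2 := by
  rcases hx : A (1, 0) with ⟨x, y⟩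
  rcases hu : A (0, 1) with ⟨u, v⟩
  refine ⟨⟨(x + v) / 2, (y - u) / 2⟩, ⟨(x - v) / 2, (y + u) / 2⟩, fun z => ?_, ?_⟩
  · have : Complex.equivRealProdCLM z = z.re • ((1 : ℝ), (0 : ℝ)) + z.im • ((0 : ℝ), (1 : ℝ)) := by
      ext <;> simp
    rw [this, map_add, map_smul, map_smul, hx, hu]
    apply Complex.ext <;> simp [Complex.equivRealProdCLM_symm_apply] <;> ring
  · rw [det_prod_formula, hx, hu, Complex.sq_norm, Complex.sq_norm, Complex.normSq_mk,
      Complex.normSq_mk]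
    ring


/-- If a `C¹` map `φ : U → ℝ²` on an open connected set `U ⊆ ℝ²` has Jacobian
determinant strictly positive at some point of `U` and strictly negative at
some other point of `U`, then `φ` is not injective on `U`.  (Hence a concave
bilinear element, whose Jacobian determinant changes sign on the parametric
square, necessarily folds onto itself.) -/
theorem sign_change_of_jacobian_not_injective
    (U : Set (ℝ × ℝ)) (hU : IsOpen U) (hConn : IsConnected U)
    (φ : ℝ × ℝ → ℝ × ℝ) (hφ : ContDiffOn ℝ 1 φ U)
    (p q : ℝ × ℝ) (hp : p ∈ U) (hq : q ∈ U)
    (hpos : (fderiv ℝ φ p).det > 0)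
    (hneg : (fderiv ℝ φ q).det < 0) :
    ¬ Set.InjOn φ U := by
  intro hinj
  let e := Complex.equivRealProdCLM
  have hd : ∀ x ∈ U, HasFDerivAt (fun z => e.symm (φ (e z)))
      ((e.symm : (ℝ × ℝ) →L[ℝ] ℂ).comp ((fderiv ℝ φ x).comp (e : ℂ →L[ℝ] (ℝ × ℝ))))
      (e.symm x) := fun x hx => by
    have h1 : HasFDerivAt φ (fderiv ℝ φ x) (e (e.symm x)) := by
      rw [e.apply_symm_apply]
      exact ((hφ.contDiffAt (hU.mem_nhds hx)).differentiableAt (by simp)).hasFDerivAt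
    exact e.symm.hasFDerivAt.comp _ (h1.comp _ e.hasFDerivAt)
  obtain ⟨a, b, hab, hdet⟩ := exists_conj_form (fderiv ℝ φ p)
  obtain ⟨a', b', hab', hdet'⟩ := exists_conj_form (fderiv ℝ φ q)
  refine core (V := e ⁻¹' U) (hU.preimage e.continuous) ?_
    (ψ := fun z => e.symm (φ (e z))) ?_ ?_ (p := e.symm p) (q := e.symm q)
    (by simpa using hp) (by simpa using hq) (hd p hp) (hd q hq) hab hab' ?_ ?_
  · have : e ⁻¹' U = e.symm '' U := (e.symm.toEquiv.image_eq_preimage_symm U).symm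
    rw [this]
    exact hConn.image _ e.symm.continuous.continuousOn
  · exact e.symm.continuous.comp_continuousOn
      (hφ.continuousOn.comp e.continuous.continuousOn fun z hz => hz)
  · intro x hx y hy hxy
    exact e.injective (hinj hx hy (e.symm.injective hxy))
  · exact lt_of_pow_lt_pow_left₀ 2 (norm_nonneg _) (by linarith)
  · exact lt_of_pow_lt_pow_left₀ 2 (norm_nonneg _) (by linarith)
end
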